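/- Let k be a positive integer and let C be a self-dual Z4-code of length 24k+16 with minimum Lee weight 8k+8. Let D be a binary self-dual code containing the residue code C^(1). If D is singly even, then D is an s-extremal self-dual code with minimum Hamming weight 4k+4. If D is doubly even, then D is extremal, i.e., its minimum Hamming weight is 4k+4 = 4⌊(24k+16)/24⌋ + 4. -/

import Mathlib

open Finset

namespace Z4Note

variable {ι : Type*} [Fintype ι]

/-- Hamming weight of a binary vector. -/
def hWt (x : ι → ZMod 2) : ℕ := (Finset.univ.filter fun i => x i ≠ 0).card

/-- Lee value of an element of `ZMod 4`:  0 ↦ 0, 1 ↦ 1, 2 ↦ 2, 3 ↦ 1. -/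
def leeVal (a : ZMod 4) : ℕ := min a.val (4 - a.val)

/-- Lee weight `n₁(x) + 2 n₂(x) + n₃(x)`. -/
def leeWt (x : ι → ZMod 4) : ℕ := ∑ i, leeVal (x i)

/-- Euclidean weight `n₁(x) + 4 n₂(x) + n₃(x)`. -/
def eucWt (x : ι → ZMod 4) : ℕ := ∑ i, (leeVal (x i)) ^ 2

/-- Number of coordinates of `x` equal to `a`. -/
def nCount (a : ZMod 4) (x : ι → ZMod 4) : ℕ := (Finset.univ.filter fun i => x i = a).card

/-- Dual of a `ZMod 4`-code (as a set), w.r.t. the standard inner product. -/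
def dualZ4 (C : Set (ι → ZMod 4)) : Set (ι → ZMod 4) :=
  {x | ∀ y ∈ C, ∑ i, x i * y i = 0}

/-- Dual of a binary code (as a set), w.r.t. the standard inner product. -/
def dual2 (C : Set (ι → ZMod 2)) : Set (ι → ZMod 2) :=
  {x | ∀ y ∈ C, ∑ i, x i * y i = 0}

/-- A `ZMod 4`-code is self-dual if it equals its dual. -/
def SelfDualZ4 (C : Submodule (ZMod 4) (ι → ZMod 4)) : Prop :=
  (C : Set (ι → ZMod 4)) = dualZ4 (C : Set (ι → ZMod 4))

/-- A binary code is self-dual if it equals its dual. -/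
def SelfDual2 (D : Submodule (ZMod 2) (ι → ZMod 2)) : Prop :=
  (D : Set (ι → ZMod 2)) = dual2 (D : Set (ι → ZMod 2))

/-- Coordinatewise reduction modulo 2. -/
def res2 (x : ι → ZMod 4) : ι → ZMod 2 :=
  fun i => ZMod.castHom (by norm_num : (2:ℕ) ∣ 4) (ZMod 2) (x i)

/-- The residue code `C⁽¹⁾ = {c mod 2 : c ∈ C}`. -/
def residue (C : Set (ι → ZMod 4)) : Set (ι → ZMod 2) := res2 '' C

/-- Minimum Lee weight among nonzero codewords. -/
noncomputable def minLee (C : Set (ι → ZMod 4)) : ℕ := sInf {d | ∃ x ∈ C, x ≠ 0 ∧ leeWt x = d}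

/-- Minimum Euclidean weight among nonzero codewords. -/
noncomputable def minEuc (C : Set (ι → ZMod 4)) : ℕ := sInf {d | ∃ x ∈ C, x ≠ 0 ∧ eucWt x = d}

/-- Minimum Hamming weight among nonzero codewords of a binary code. -/
noncomputable def minHam (C : Set (ι → ZMod 2)) : ℕ := sInf {d | ∃ x ∈ C, x ≠ 0 ∧ hWt x = d}

/-- A binary code is doubly even if all weights are divisible by 4. -/
def DoublyEven (C : Set (ι → ZMod 2)) : Prop := ∀ x ∈ C, 4 ∣ hWt x

/-- A binary code is singly even if some codeword has weight not divisible by 4. -/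
def SinglyEven (C : Set (ι → ZMod 2)) : Prop := ∃ x ∈ C, ¬ 4 ∣ hWt x

/-- A self-dual `ZMod 4`-code is Type II if all Euclidean weights are divisible by 8. -/
def TypeII (C : Set (ι → ZMod 4)) : Prop := ∀ x ∈ C, 8 ∣ eucWt x

/-- The doubly even subcode of a binary code. -/
def evenSubcode (D : Set (ι → ZMod 2)) : Set (ι → ZMod 2) := {x ∈ D | 4 ∣ hWt x}

/-- The shadow `S = D₀^⊥ \ D` of a binary code. -/
def shadow (D : Set (ι → ZMod 2)) : Set (ι → ZMod 2) := dual2 (evenSubcode D) \ D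

/-- A binary singly even self-dual code is s-extremal if equality holds in the
Bachoc–Gaborit bound relating the minimum weight of the code and of its shadow. -/
def SExtremal (D : Submodule (ZMod 2) (ι → ZMod 2)) : Prop :=
  SelfDual2 D ∧ SinglyEven (D : Set (ι → ZMod 2)) ∧
  ((¬ (Fintype.card ι % 24 = 22 ∧
        minHam (D : Set (ι → ZMod 2)) = 4 * (Fintype.card ι / 24) + 6)) →
      minHam (shadow (D : Set (ι → ZMod 2))) + 2 * minHam (D : Set (ι → ZMod 2)) =
        Fintype.card ι / 2 + 4) ∧
  ((Fintype.card ι % 24 = 22 ∧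
        minHam (D : Set (ι → ZMod 2)) = 4 * (Fintype.card ι / 24) + 6) →
      minHam (shadow (D : Set (ι → ZMod 2))) + 2 * minHam (D : Set (ι → ZMod 2)) =
        Fintype.card ι / 2 + 8)

/-- Equivalence of `ZMod 4`-codes: coordinate permutation together with sign changes. -/
def Z4Equiv (C C' : Set (ι → ZMod 4)) : Prop :=
  ∃ σ : Equiv.Perm ι, ∃ ε : ι → ZMod 4, (∀ i, ε i = 1 ∨ ε i = -1) ∧
    C' = (fun x => fun i => ε i * x (σ i)) '' C

/-- Covering radius of a binary code. -/
noncomputable def covRad (C : Set (ι → ZMod 2)) : ℕ :=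
  sInf {R | ∀ v : ι → ZMod 2, ∃ c ∈ C, hWt (v - c) ≤ R}

/-- Entry `(i,j)` of the circulant matrix with first row `r`. -/
def circEntry {m : ℕ} (r : Fin m → ZMod 4) (i j : Fin m) : ZMod 4 := r (j - i)

/-- Entry `(i,j)` of the negacirculant matrix with first row `r`. -/
def negaEntry {m : ℕ} (r : Fin m → ZMod 4) (i j : Fin m) : ZMod 4 :=
  if i.val ≤ j.val then r (j - i) else - r (j - i)

/-- The bordered part `B` of the generator matrix of a bordered double circulant code. -/
def bdcB {m : ℕ} (α β γ : ZMod 4) (r : Fin m → ZMod 4) :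
    Fin (m+1) → Fin (m+1) → ZMod 4 :=
  Fin.cases (Fin.cases α fun _ => β) (fun i' => Fin.cases γ fun j' => circEntry r i' j')

/-- Row `i` of the generator matrix `(I | B)` of a bordered double circulant code. -/
def bdcRow {m : ℕ} (α β γ : ZMod 4) (r : Fin m → ZMod 4) (i : Fin (m+1)) :
    (Fin (m+1) ⊕ Fin (m+1)) → ZMod 4 :=
  Sum.elim (fun j => if j = i then 1 else 0) (bdcB α β γ r i)

/-- The bordered double circulant code of length `2(m+1)`. -/
def bdcCode {m : ℕ} (α β γ : ZMod 4) (r : Fin m → ZMod 4) :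
    Submodule (ZMod 4) ((Fin (m+1) ⊕ Fin (m+1)) → ZMod 4) :=
  Submodule.span (ZMod 4) (Set.range (bdcRow α β γ r))

/-- The block matrix `[[A, B], [-Bᵀ, Aᵀ]]` built from negacirculant `A`, `B`. -/
def fourNegaM {n : ℕ} (a b : Fin n → ZMod 4) :
    (Fin n ⊕ Fin n) → (Fin n ⊕ Fin n) → ZMod 4
  | Sum.inl i, Sum.inl j => negaEntry a i j
  | Sum.inl i, Sum.inr j => negaEntry b i j
  | Sum.inr i, Sum.inl j => - negaEntry b j i
  | Sum.inr i, Sum.inr j => negaEntry a j i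

/-- Row `i` of the generator matrix `(I | M)` of a four-negacirculant code. -/
def fourNegaRow {n : ℕ} (a b : Fin n → ZMod 4) (i : Fin n ⊕ Fin n) :
    ((Fin n ⊕ Fin n) ⊕ (Fin n ⊕ Fin n)) → ZMod 4 :=
  Sum.elim (fun j => if j = i then 1 else 0) (fourNegaM a b i)

/-- The four-negacirculant code of length `4n`. -/
def fourNegaCode {n : ℕ} (a b : Fin n → ZMod 4) :
    Submodule (ZMod 4) (((Fin n ⊕ Fin n) ⊕ (Fin n ⊕ Fin n)) → ZMod 4) :=
  Submodule.span (ZMod 4) (Set.range (fourNegaRow a b))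

end Z4Note

/-!
A vector `x` orthogonal to the residue code of `C` doubles to a word `2 * x` of `C`, of Lee weight
twice the Hamming weight of `x`. Both `D` and its shadow are orthogonal to the residue code, whose
words have weights divisible by four, so all their nonzero weights are at least `4 * k + 4`. In the
singly even case this is exactly what the Bachoc–Gaborit bound leaves room for, and in the doubly
even case the Mallows–Sloane bound.

For either bound, suppose that the weight enumerator of `D` agrees with `1` up to one order too
many. By the MacWilliams identity it is invariant, hence by Gleason's theorem it is of the form
`∑ a j * f ^ (m - c * j) * g ^ j` with `j ≤ J`, where `f` and `g` are the two Gleason generators.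
The enumerator of the shadow is the MacWilliams transform of `∑ (-1) ^ (wt x / 2) * X ^ wt x`, so a
large shadow weight makes a power of `1 + X` divide the enumerator and lowers `J`. Dividing by
`f ^ m` turns the expansion into a power series in `g / f ^ c`, and Lagrange inversion forces one
explicit coefficient of a product of powers of `f`, `g` and `f'` to vanish. That coefficient is
visibly nonzero, except in the exceptional case of the Bachoc–Gaborit bound.
-/

namespace Z4Note

section MacWilliamsTransform

open Polynomial

variable {R : Type*} [CommRing R]

/-- The MacWilliams transform `p ↦ (1 + X) ^ n * p ((1 - X) / (1 + X))` of polynomials of degree at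
most `n`, i.e. the substitution `(x, y) ↦ (x + y, x - y)` in the homogenization of `p`. Coefficients
of `p` beyond degree `n` are ignored. -/
noncomputable def macWilliams (n : ℕ) : R[X] →ₗ[R] R[X] :=
  ∑ i ∈ range (n + 1), (lcoeff R i).smulRight ((1 - X) ^ i * (1 + X) ^ (n - i))

lemma macWilliams_apply (n : ℕ) (p : R[X]) :
    macWilliams n p = ∑ i ∈ range (n + 1), p.coeff i • ((1 - X) ^ i * (1 + X) ^ (n - i)) := by
  simp [macWilliams, LinearMap.sum_apply]

lemma macWilliams_X_pow {n i : ℕ} (h : i ≤ n) :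
    macWilliams n (X ^ i : R[X]) = (1 - X) ^ i * (1 + X) ^ (n - i) := by
  rw [macWilliams_apply, sum_eq_single_of_mem i (mem_range.2 (by lia))]
  · simp
  · intro j _ hj
    simp [coeff_X_pow, hj]

lemma macWilliams_one (n : ℕ) : macWilliams n (1 : R[X]) = (1 + X) ^ n := by
  simpa using macWilliams_X_pow (R := R) (Nat.zero_le n)

lemma macWilliams_X {n : ℕ} (hn : 1 ≤ n) :
    macWilliams n (X : R[X]) = (1 - X) * (1 + X) ^ (n - 1) := by
  simpa using macWilliams_X_pow (R := R) hn

lemma macWilliams_mul {a b : ℕ} {p q : R[X]} (hp : p.natDegree ≤ a) (hq : q.natDegree ≤ b) :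
    macWilliams (a + b) (p * q) = macWilliams a p * macWilliams b q := by
  conv_lhs => rw [as_sum_range_C_mul_X_pow' p (Nat.lt_succ_of_le hp),
    as_sum_range_C_mul_X_pow' q (Nat.lt_succ_of_le hq)]
  simp only [macWilliams_apply a, macWilliams_apply b, sum_mul_sum, map_sum]
  refine sum_congr rfl fun i hi => sum_congr rfl fun j hj => ?_
  rw [mem_range] at hi hj
  have monomial_mul : C (p.coeff i) * X ^ i * (C (q.coeff j) * X ^ j) =
      (p.coeff i * q.coeff j) • X ^ (i + j) := by
    rw [smul_eq_C_mul, C_mul]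
    ring
  rw [monomial_mul, map_smul, macWilliams_X_pow (by lia),
    show a + b - (i + j) = (a - i) + (b - j) by lia]
  simp only [smul_eq_C_mul, C_mul]
  ring

lemma macWilliams_pow {a : ℕ} {p : R[X]} (hp : p.natDegree ≤ a) (k : ℕ) :
    macWilliams (a * k) (p ^ k) = macWilliams a p ^ k := by
  induction k with
  | zero => simp [macWilliams_one]
  | succ k ih =>
    have hpk : (p ^ k).natDegree ≤ a * k := by
      rw [mul_comm]
      exact natDegree_pow_le_of_le k hp
    rw [pow_succ, mul_add, mul_one, macWilliams_mul hpk hp, ih, pow_succ]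

lemma macWilliams_macWilliams {n : ℕ} {p : R[X]} (hp : p.natDegree ≤ n) :
    macWilliams n (macWilliams n p) = (2 ^ n : R) • p := by
  have one_sub : macWilliams 1 (1 - X : R[X]) = 2 * X := by
    rw [map_sub, macWilliams_one, macWilliams_X le_rfl]
    ring
  have one_add : macWilliams 1 (1 + X : R[X]) = 2 := by
    rw [map_add, macWilliams_one, macWilliams_X le_rfl]
    ring
  have twice_X_pow {i m : ℕ} :
      macWilliams (i + m) ((1 - X) ^ i * (1 + X) ^ m : R[X]) = 2 ^ (i + m) * X ^ i := by
    have deg_sub : (1 - X : R[X]).natDegree ≤ 1 := by compute_degree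
    have deg_add : (1 + X : R[X]).natDegree ≤ 1 := by compute_degree
    have transform_sub := macWilliams_pow deg_sub i
    have transform_add := macWilliams_pow deg_add m
    rw [one_mul] at transform_sub transform_add
    rw [macWilliams_mul (by simpa using natDegree_pow_le_of_le i deg_sub)
      (by simpa using natDegree_pow_le_of_le m deg_add), transform_sub, transform_add, one_sub,
      one_add]
    ring
  rw [macWilliams_apply n p, map_sum]
  conv_rhs => rw [as_sum_range_C_mul_X_pow' p (Nat.lt_succ_of_le hp), smul_sum]
  refine sum_congr rfl fun i hi => ?_
  rw [mem_range] at hi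
  obtain ⟨m, rfl⟩ : ∃ m, n = i + m := ⟨n - i, by lia⟩
  rw [map_smul, Nat.add_sub_cancel_left, twice_X_pow]
  simp only [smul_eq_C_mul, C_pow, map_ofNat]
  ring

lemma one_sub_X_pow_dvd_macWilliams {s : ℕ} {p : R[X]} (hdvd : X ^ s ∣ p) (n : ℕ) :
    (1 - X) ^ s ∣ macWilliams n p := by
  rw [macWilliams_apply]
  refine dvd_sum fun i _ => ?_
  rcases lt_or_ge i s with his | hsi
  · simp [X_pow_dvd_iff.1 hdvd i his]
  · exact dvd_smul_of_dvd _ ((pow_dvd_pow _ hsi).mul_right _)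

lemma coeff_macWilliams {n : ℕ} {p : R[X]} (hp : p.natDegree ≤ n) :
    (macWilliams n p).coeff n = p.eval (-1) := by
  have coeff_term {i m : ℕ} : ((1 - X) ^ i * (1 + X) ^ m : R[X]).coeff (i + m) = (-1) ^ i := by
    have deg_sub : (1 - X : R[X]).natDegree ≤ 1 := by compute_degree
    have deg_add : (1 + X : R[X]).natDegree ≤ 1 := by compute_degree
    have coeff_sub_pow := coeff_pow_of_natDegree_le deg_sub (m := i)
    have coeff_add_pow := coeff_pow_of_natDegree_le deg_add (m := m)
    rw [coeff_mul_add_eq_of_natDegree_le (by simpa using natDegree_pow_le_of_le i deg_sub)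
      (by simpa using natDegree_pow_le_of_le m deg_add)]
    simp_all [coeff_one]
  rw [macWilliams_apply, finsetSum_coeff, eval_eq_sum_range' (Nat.lt_succ_of_le hp)]
  refine sum_congr rfl fun i hi => ?_
  rw [mem_range] at hi
  obtain ⟨m, rfl⟩ : ∃ m, n = i + m := ⟨n - i, by lia⟩
  rw [Nat.add_sub_cancel_left, coeff_smul, coeff_term, smul_eq_mul]

end MacWilliamsTransform

section Gleason

open Polynomial

variable {R K : Type*} [CommRing R] [Field K] [CharZero K]

/-- The dehomogenization `p` of a binary form of degree `2 * m` which is invariant under the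
normalized MacWilliams substitution `(x, y) ↦ ((x + y) / √2, (x - y) / √2)`, as is the weight
enumerator of a self-dual binary code of length `2 * m`. -/
structure IsInvariant (m : ℕ) (p : R[X]) : Prop where
  natDegree_le : p.natDegree ≤ 2 * m
  macWilliams_eq : macWilliams (2 * m) p = (2 ^ m : R) • p

namespace IsInvariant

variable {m l : ℕ}

lemma sub {p q : R[X]} (hp : IsInvariant m p) (hq : IsInvariant m q) : IsInvariant m (p - q) where
  natDegree_le := (natDegree_sub_le _ _).trans (max_le hp.natDegree_le hq.natDegree_le)
  macWilliams_eq := by rw [map_sub, hp.macWilliams_eq, hq.macWilliams_eq, smul_sub]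

lemma C_mul {p : R[X]} (hp : IsInvariant m p) (a : R) : IsInvariant m (C a * p) where
  natDegree_le := (natDegree_C_mul_le _ _).trans hp.natDegree_le
  macWilliams_eq := by rw [← smul_eq_C_mul, map_smul, hp.macWilliams_eq, smul_comm]

lemma mul {p q : R[X]} (hp : IsInvariant m p) (hq : IsInvariant l q) :
    IsInvariant (m + l) (p * q) where
  natDegree_le := by
    rw [mul_add]
    exact natDegree_mul_le_of_le hp.natDegree_le hq.natDegree_le
  macWilliams_eq := by
    rw [mul_add, macWilliams_mul hp.natDegree_le hq.natDegree_le, hp.macWilliams_eq,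
      hq.macWilliams_eq, smul_mul_smul_comm, pow_add]

lemma one : IsInvariant 0 (1 : R[X]) where
  natDegree_le := by simp
  macWilliams_eq := by simp [macWilliams_one]

lemma pow {p : R[X]} (hp : IsInvariant m p) (k : ℕ) : IsInvariant (m * k) (p ^ k) := by
  induction k with
  | zero => simpa using one
  | succ k ih => exact pow_succ p k ▸ ih.mul hp

lemma of_mul_left {p q : K[X]} (hp : IsInvariant m p) (hp0 : p ≠ 0)
    (hq : q.natDegree ≤ 2 * l) (hpq : IsInvariant (m + l) (p * q)) : IsInvariant l q where
  natDegree_le := hq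
  macWilliams_eq := by
    have transform_mul := hpq.macWilliams_eq
    rw [mul_add, macWilliams_mul hp.natDegree_le hq, hp.macWilliams_eq, pow_add,
      ← smul_mul_smul_comm] at transform_mul
    exact mul_left_cancel₀ (smul_ne_zero (by simp) hp0) transform_mul

lemma one_sub_X_pow_dvd {p : K[X]} {s : ℕ} (hp : IsInvariant m p) (hdvd : X ^ s ∣ p) :
    (1 - X) ^ s ∣ p := by
  have transform_dvd := one_sub_X_pow_dvd_macWilliams hdvd (2 * m)
  rwa [hp.macWilliams_eq, smul_eq_C_mul, (isUnit_C.2 (by simp)).dvd_mul_left] at transform_dvd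

lemma coeff_two_mul {p : K[X]} (hp : IsInvariant m p) (hp1 : p.eval (-1) = 0) :
    p.coeff (2 * m) = 0 := by
  have coeff_transform := coeff_macWilliams hp.natDegree_le
  rw [hp.macWilliams_eq, coeff_smul, hp1, smul_eq_mul] at coeff_transform
  simpa using coeff_transform

lemma one_add_X_sq : IsInvariant 1 (1 + X ^ 2 : R[X]) where
  natDegree_le := by compute_degree
  macWilliams_eq := by
    rw [map_add, macWilliams_one, macWilliams_X_pow (by norm_num), smul_eq_C_mul]
    simp only [map_pow, map_ofNat]
    ring

lemma one_add_X_pow_four_add_X_pow_eight : IsInvariant 4 (1 + 14 * X ^ 4 + X ^ 8 : R[X]) where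
  natDegree_le := by compute_degree
  macWilliams_eq := by
    have smul_form : (1 + 14 * X ^ 4 + X ^ 8 : R[X]) = 1 + (14 : R) • X ^ 4 + X ^ 8 := by
      simp only [smul_eq_C_mul, map_ofNat]
    rw [smul_form, map_add, map_add, map_smul, macWilliams_one, macWilliams_X_pow (by norm_num),
      macWilliams_X_pow (by norm_num)]
    simp only [smul_eq_C_mul, map_pow, map_ofNat]
    ring

lemma X_sub_X_pow_three : IsInvariant 2 (X - X ^ 3 : R[X]) where
  natDegree_le := by compute_degree!
  macWilliams_eq := by
    rw [map_sub, macWilliams_X (by norm_num), macWilliams_X_pow (by norm_num), smul_eq_C_mul]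
    simp only [map_pow, map_ofNat]
    ring

lemma X_sub_X_pow_five : IsInvariant 3 (X - X ^ 5 : R[X]) where
  natDegree_le := by compute_degree!
  macWilliams_eq := by
    rw [map_sub, macWilliams_X (by norm_num), macWilliams_X_pow (by norm_num), smul_eq_C_mul]
    simp only [map_pow, map_ofNat]
    ring

end IsInvariant

/-- Since `X ^ e - 1` has a simple zero at `1`, the substitution `X ↦ X ^ e` does not change the
order of vanishing at `1`. -/
lemma one_sub_X_pow_dvd_of_dvd_expand {e s : ℕ} (he : e ≠ 0) {w : K[X]}
    (hdvd : (1 - X) ^ s ∣ expand K e w) : (1 - X) ^ s ∣ w := by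
  induction s generalizing w with
  | zero => simp
  | succ s ih =>
    have eval_one : w.eval 1 = 0 := by
      have eval_expand := eval_dvd (x := 1) (dvd_of_mul_left_dvd hdvd)
      simpa [expand_eval] using eval_expand
    obtain ⟨u, rfl⟩ : 1 - X ∣ w := by
      rw [← neg_sub, neg_dvd, ← C_1, dvd_iff_isRoot]
      exact eval_one
    have coprime_geom_sum : IsCoprime ((1 - X) ^ s : K[X]) (∑ i ∈ range e, X ^ i) := by
      rw [← neg_sub (X : K[X]) 1, ← C_1]
      refine ((irreducible_X_sub_C 1).coprime_iff_not_dvd.2 fun h => ?_).neg_left.pow_left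
      rw [dvd_iff_isRoot] at h
      simp [IsRoot, eval_finsetSum, he] at h
    have expand_eq :
        expand K e ((1 - X) * u) = (1 - X) * ((∑ i ∈ range e, X ^ i) * expand K e u) := by
      rw [map_mul, map_sub, map_one, expand_X, ← mul_assoc, mul_neg_geom_sum]
    rw [expand_eq, pow_succ', mul_dvd_mul_iff_left (sub_ne_zero.2 (X_ne_C 1).symm)] at hdvd
    rw [pow_succ']
    exact mul_dvd_mul_left _ (ih (coprime_geom_sum.dvd_of_dvd_mul_left hdvd))

lemma isCoprime_X_one_sub_X_pow (e : ℕ) : IsCoprime (X : R[X]) ((1 - X) ^ e) :=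
  IsCoprime.pow_right ⟨1, 1, by ring⟩

lemma IsInvariant.exists_eq_X_mul_one_sub_X_pow_mul {m e : ℕ} (he : Even e) (he0 : e ≠ 0)
    (hem : e ∣ 2 * m) {w : K[X]} (hw : IsInvariant m (expand K e w)) (hw0 : w ≠ 0)
    (hcoeff : w.coeff 0 = 0) :
    ∃ v, w = X * (1 - X) ^ e * v ∧ e * v.natDegree + e * (e + 2) ≤ 2 * m := by
  have deg_expand : w.natDegree * e ≤ 2 * m := natDegree_expand e w ▸ hw.natDegree_le
  have X_dvd : X ∣ w := X_dvd_iff.2 hcoeff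
  have X_pow_dvd : X ^ e ∣ expand K e w := by
    simpa using (expand K e).toRingHom.map_dvd X_dvd
  have dvd_at_one : (1 - X) ^ e ∣ w :=
    one_sub_X_pow_dvd_of_dvd_expand he0 (hw.one_sub_X_pow_dvd X_pow_dvd)
  obtain ⟨v, rfl⟩ := (isCoprime_X_one_sub_X_pow e).mul_dvd X_dvd dvd_at_one
  refine ⟨v, rfl, ?_⟩
  have v_ne_zero : v ≠ 0 := right_ne_zero_of_mul hw0
  have natDegree_eq : (X * (1 - X) ^ e * v).natDegree = 1 + e + v.natDegree := by
    rw [natDegree_mul (left_ne_zero_of_mul hw0) v_ne_zero,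
      natDegree_mul X_ne_zero (right_ne_zero_of_mul (left_ne_zero_of_mul hw0)), natDegree_pow,
      natDegree_X, show (1 - X : K[X]).natDegree = 1 by compute_degree!, mul_one]
  -- The value of the expanded polynomial at `-1` is that of `w` at `1`, so the coefficient of
  -- `X ^ (2 * m)` vanishes.
  have top_coeff : (X * (1 - X) ^ e * v).coeff (2 * m / e) = 0 := by
    have coeff_expand := hw.coeff_two_mul (by simp [expand_eval, he.neg_one_pow, he0])
    rwa [← Nat.div_mul_cancel hem, coeff_expand_mul he0.bot_lt] at coeff_expand
  have natDegree_ne : (X * (1 - X) ^ e * v).natDegree ≠ 2 * m / e := fun h =>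
    hw0 (leadingCoeff_eq_zero.1 (by rwa [leadingCoeff, h]))
  obtain ⟨d, hd⟩ := hem
  rw [hd, Nat.mul_div_cancel_left _ he0.bot_lt] at natDegree_ne
  rw [natDegree_eq] at natDegree_ne deg_expand
  rw [hd] at deg_expand ⊢
  have natDegree_le : 1 + e + v.natDegree ≤ d := by
    rw [mul_comm] at deg_expand
    exact Nat.le_of_mul_le_mul_left deg_expand he0.bot_lt
  calc e * v.natDegree + e * (e + 2) = e * (1 + e + v.natDegree + 1) := by ring
    _ ≤ e * d := Nat.mul_le_mul_left e (by lia)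

/-- Gleason's theorem for the ring generated by a form `expand K e f` of degree `2 * l` and the form
`expand K e (X * (1 - X) ^ e)` of degree `2 * l * c`. The case `e = 2` describes the weight
enumerators of self-dual codes and `e = 4` those of doubly even ones. -/
theorem IsInvariant.exists_eq_sum {e l c : ℕ} (he : Even e) (he0 : e ≠ 0) (hel : e ∣ 2 * l)
    (hdeg : e * (e + 2) = 2 * (l * c)) {f : K[X]} (hf0 : f.coeff 0 = 1)
    (hf : IsInvariant l (expand K e f))
    (hg : IsInvariant (l * c) (expand K e (X * (1 - X) ^ e))) (n : ℕ) {w : K[X]}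
    (hw : IsInvariant (l * n) (expand K e w)) :
    ∃ a : ℕ → K, w =
      ∑ j ∈ range (n / c + 1), C (a j) * f ^ (n - c * j) * (X * (1 - X) ^ e) ^ j := by
  induction n using Nat.strong_induction_on generalizing w with
  | _ n ih =>
  have lc_pos : 0 < l * c := by
    have : 0 < e * (e + 2) := by positivity
    lia
  have l_pos : 0 < l := Nat.pos_of_mul_pos_right lc_pos
  have c_pos : 0 < c := Nat.pos_of_mul_pos_left lc_pos
  have remainder_invariant : IsInvariant (l * n) (expand K e (w - C (w.coeff 0) * f ^ n)) := by
    simpa using hw.sub ((hf.pow n).C_mul (w.coeff 0))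
  have remainder_coeff : (w - C (w.coeff 0) * f ^ n).coeff 0 = 0 := by
    rw [coeff_sub, coeff_C_mul, coeff_zero_eq_eval_zero (f ^ n), eval_pow,
      ← coeff_zero_eq_eval_zero, hf0, one_pow, mul_one, sub_self]
  rcases eq_or_ne (w - C (w.coeff 0) * f ^ n) 0 with remainder_eq_zero | remainder_ne_zero
  · refine ⟨Pi.single 0 (w.coeff 0), ?_⟩
    rw [sum_eq_single_of_mem 0 (by simp) (fun j _ hj => by simp [hj])]
    simpa [sub_eq_zero] using remainder_eq_zero
  obtain ⟨v, hv, deg_v⟩ := remainder_invariant.exists_eq_X_mul_one_sub_X_pow_mul he he0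
    (by rw [← mul_assoc]; exact hel.mul_right n) remainder_ne_zero remainder_coeff
  have c_le : c ≤ n := by
    rw [hdeg] at deg_v
    exact Nat.le_of_mul_le_mul_left (by lia : l * c ≤ l * n) l_pos
  have v_invariant : IsInvariant (l * (n - c)) (expand K e v) := by
    refine hg.of_mul_left ?_ ?_ ?_
    · rw [expand_ne_zero he0.bot_lt]
      exact left_ne_zero_of_mul (hv ▸ remainder_ne_zero)
    · rw [natDegree_expand, Nat.mul_sub, Nat.mul_sub]
      lia
    · rw [← map_mul, ← hv, ← mul_add, Nat.add_sub_cancel' c_le]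
      exact remainder_invariant
  obtain ⟨b, hb⟩ := ih (n - c) (by lia) v_invariant
  refine ⟨fun j => if j = 0 then w.coeff 0 else b (j - 1), ?_⟩
  rw [Nat.div_eq_sub_div c_pos c_le, sum_range_succ']
  simp only [Nat.add_eq_zero_iff, one_ne_zero, and_false, if_false, if_true, Nat.add_sub_cancel,
    mul_zero, pow_zero, mul_one, Nat.sub_zero]
  rw [← sub_eq_iff_eq_add, hv]
  nth_rewrite 1 [hb]
  rw [mul_sum]
  refine sum_congr rfl fun j _ => ?_
  rw [show n - c * (j + 1) = n - c - c * j by rw [mul_add, mul_one]; lia]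
  ring

end Gleason

section LagrangeInversion

open PowerSeries

lemma X_pow_dvd_derivative {R : Type*} [CommRing R] {n : ℕ} {F : R⟦X⟧} (hF : X ^ (n + 1) ∣ F) :
    X ^ n ∣ d⁄dX R F := by
  rw [X_pow_dvd_iff] at hF ⊢
  intro i hi
  rw [coeff_derivative, hF (i + 1) (by lia), zero_mul]

variable {K : Type*} [Field K] [CharZero K]

lemma coeff_pow_sub_X_mul_derivative (H : K⟦X⟧) (l : ℕ) :
    coeff (l + 1) (H ^ (l + 1) - X * (H ^ l * d⁄dX K H)) = 0 := by
  have coeff_derivative_pow := coeff_derivative (H ^ (l + 1)) l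
  rw [derivative_pow, Nat.add_sub_cancel, mul_assoc, ← map_natCast (C (R := K)), coeff_C_mul,
    mul_comm (coeff (l + 1) _), ← Nat.cast_succ] at coeff_derivative_pow
  rw [map_sub, coeff_succ_X_mul,
    mul_left_cancel₀ (Nat.cast_ne_zero.2 l.succ_ne_zero) coeff_derivative_pow, sub_self]

/-- Put `u = X * H⁻¹`. The coefficient is the residue of `d (u ^ j) / u ^ N`, which is exact for
`j ≠ N`. -/
lemma coeff_derivative_X_mul_inv_pow_mul_pow {H : K⟦X⟧} (hH : constantCoeff H ≠ 0) {j N : ℕ}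
    (hj : j < N) : coeff (N - 1) (d⁄dX K ((X * H⁻¹) ^ j) * H ^ N) = 0 := by
  rcases j with _ | i
  · simp
  obtain ⟨l, rfl⟩ : ∃ l, N = i + 1 + (l + 1) := ⟨N - i - 2, by lia⟩
  have inv_mul : H⁻¹ * H = 1 := PowerSeries.inv_mul_cancel H hH
  have inv_pow_mul : H⁻¹ ^ i * H ^ i = 1 := by rw [← mul_pow, inv_mul, one_pow]
  have derivative_mul_sq : d⁄dX K (X * H⁻¹) * H ^ 2 = H - X * d⁄dX K H := by
    rw [Derivation.leibniz, derivative_inv', derivative_X]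
    simp only [smul_eq_mul, mul_one]
    linear_combination (H - X * d⁄dX K H * (H⁻¹ * H + 1)) * inv_mul
  have exact_form : d⁄dX K ((X * H⁻¹) ^ (i + 1)) * H ^ (i + 1 + (l + 1)) =
      C ((i + 1 : ℕ) : K) * (X ^ i * (H ^ (l + 1) - X * (H ^ l * d⁄dX K H))) := by
    rw [derivative_pow, Nat.add_sub_cancel, map_natCast, mul_pow]
    linear_combination ((i + 1 : ℕ) : K⟦X⟧) * X ^ i * H ^ l *
      ((d⁄dX K (X * H⁻¹) * H ^ 2) * inv_pow_mul + derivative_mul_sq)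
  rw [exact_form, coeff_C_mul, show i + 1 + (l + 1) - 1 = l + 1 + i by lia, coeff_X_pow_mul,
    coeff_pow_sub_X_mul_derivative, mul_zero]

/-- The hypothesis reads `f⁻¹ ^ m ≡ ∑ j, a j * (X * g * f⁻¹ ^ c) ^ j` modulo `X ^ (N + 1)`, and the
conclusion is the Lagrange inversion formula for the vanishing coefficient `a N`. -/
lemma coeff_derivative_mul_inv_pow_eq_zero {f g r : K⟦X⟧} (hf : constantCoeff f ≠ 0)
    (hg : constantCoeff g ≠ 0) {c m J N : ℕ} (hm : m ≠ 0) (hcJ : c * J ≤ m) (hJN : J < N)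
    {a : ℕ → K}
    (h : ∑ j ∈ range (J + 1), C (a j) * f ^ (m - c * j) * (X * g) ^ j = 1 + X ^ (N + 1) * r) :
    coeff (N - 1) (d⁄dX K f * f⁻¹ ^ (m + 1) * (f ^ c * g⁻¹) ^ N) = 0 := by
  set H := f ^ c * g⁻¹ with hH
  have H_ne_zero : constantCoeff H ≠ 0 := by simp [hH, hf, hg]
  have H_inv : H⁻¹ = g * f⁻¹ ^ c := by
    rw [PowerSeries.inv_eq_iff_mul_eq_one H_ne_zero, hH]
    calc g * f⁻¹ ^ c * (f ^ c * g⁻¹) = (f⁻¹ * f) ^ c * (g⁻¹ * g) := by ring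
      _ = 1 := by simp [PowerSeries.inv_mul_cancel, hf, hg]
  have term_eq {j : ℕ} (hj : j ∈ range (J + 1)) :
      C (a j) * f ^ (m - c * j) * (X * g) ^ j * f⁻¹ ^ m = C (a j) * (X * H⁻¹) ^ j := by
    have cj_le : c * j ≤ m := (Nat.mul_le_mul_left c (mem_range_succ_iff.1 hj)).trans hcJ
    have cancel : f ^ (m - c * j) * f⁻¹ ^ (m - c * j) = 1 := by
      rw [← mul_pow, PowerSeries.mul_inv_cancel f hf, one_pow]
    rw [H_inv, ← Nat.sub_add_cancel cj_le, pow_add, Nat.add_sub_cancel, mul_pow, mul_pow, mul_pow,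
      ← pow_mul]
    linear_combination C (a j) * X ^ j * g ^ j * f⁻¹ ^ (c * j) * cancel
  have inv_pow_eq : f⁻¹ ^ m =
      ∑ j ∈ range (J + 1), C (a j) * (X * H⁻¹) ^ j - X ^ (N + 1) * (r * f⁻¹ ^ m) := by
    rw [← sum_congr rfl fun j hj => term_eq hj, ← sum_mul, h]
    ring
  have coeff_derivative_inv_pow : coeff (N - 1) (d⁄dX K (f⁻¹ ^ m) * H ^ N) = 0 := by
    have remainder : coeff (N - 1) (d⁄dX K (X ^ (N + 1) * (r * f⁻¹ ^ m)) * H ^ N) = 0 :=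
      X_pow_dvd_iff.1 ((X_pow_dvd_derivative (dvd_mul_right _ _)).mul_right _) _ (by lia)
    rw [inv_pow_eq, map_sub, sub_mul, map_sub, remainder, sub_zero, map_sum, sum_mul, map_sum]
    refine sum_eq_zero fun j hj => ?_
    rw [← smul_eq_C_mul, Derivation.map_smul, smul_mul_assoc, coeff_smul,
      coeff_derivative_X_mul_inv_pow_mul_pow H_ne_zero (by rw [mem_range] at hj; lia), smul_zero]
  have derivative_eq : d⁄dX K (f⁻¹ ^ m) = C (-m : K) * (d⁄dX K f * f⁻¹ ^ (m + 1)) := by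
    obtain ⟨t, rfl⟩ := Nat.exists_eq_succ_of_ne_zero hm
    rw [derivative_pow, derivative_inv', map_neg, map_natCast, Nat.succ_eq_add_one,
      Nat.add_sub_cancel]
    ring
  rw [derivative_eq, mul_assoc, coeff_C_mul] at coeff_derivative_inv_pow
  simpa [hm] using coeff_derivative_inv_pow

end LagrangeInversion

section Positivity

open PowerSeries

variable {K : Type*} [Field K] [LinearOrder K] [IsStrictOrderedRing K]

lemma coeff_mul_nonneg {F G : K⟦X⟧} (hF : ∀ n, 0 ≤ coeff n F) (hG : ∀ n, 0 ≤ coeff n G) (n : ℕ) :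
    0 ≤ coeff n (F * G) := by
  rw [coeff_mul]
  exact sum_nonneg fun p _ => mul_nonneg (hF p.1) (hG p.2)

lemma coeff_pow_nonneg {F : K⟦X⟧} (hF : ∀ n, 0 ≤ coeff n F) (t n : ℕ) : 0 ≤ coeff n (F ^ t) := by
  induction t generalizing n with
  | zero =>
    rw [pow_zero, coeff_one]
    split_ifs <;> simp
  | succ t ih => exact pow_succ F t ▸ coeff_mul_nonneg ih hF n

lemma coeff_mul_pos {F G : K⟦X⟧} (hF : ∀ n, 0 ≤ coeff n F) (hG : ∀ n, 0 ≤ coeff n G) {i j : ℕ}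
    (hi : 0 < coeff i F) (hj : 0 < coeff j G) : 0 < coeff (i + j) (F * G) := by
  rw [coeff_mul]
  exact sum_pos' (fun p _ => mul_nonneg (hF p.1) (hG p.2))
    ⟨(i, j), mem_antidiagonal.2 rfl, mul_pos hi hj⟩

lemma coeff_pow_pos {F : K⟦X⟧} (hF : ∀ n, 0 ≤ coeff n F) (hF0 : 0 < constantCoeff F) {n : ℕ}
    (hn : 0 < coeff n F) {t : ℕ} (ht : t ≠ 0) : 0 < coeff n (F ^ t) := by
  obtain ⟨t, rfl⟩ := Nat.exists_eq_succ_of_ne_zero ht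
  have constant_pos : 0 < coeff 0 (F ^ t) := by
    rw [coeff_zero_eq_constantCoeff_apply, map_pow]
    exact pow_pos hF0 t
  simpa [pow_succ] using coeff_mul_pos (coeff_pow_nonneg hF t) hF constant_pos hn

lemma coeff_one_add_X_nonneg (n : ℕ) : 0 ≤ coeff n (1 + X : K⟦X⟧) := by
  rw [map_add, coeff_one, coeff_X]
  split_ifs <;> norm_num

lemma constantCoeff_one_sub_X_sq_ne_zero : constantCoeff (1 - X ^ 2 : K⟦X⟧) ≠ 0 := by simp

lemma coeff_one_sub_X_sq_inv (n : ℕ) :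
    coeff n (1 - X ^ 2 : K⟦X⟧)⁻¹ = if Even n then 1 else 0 := by
  suffices (1 - X ^ 2 : K⟦X⟧)⁻¹ = mk fun n => if Even n then 1 else 0 by rw [this, coeff_mk]
  rw [PowerSeries.inv_eq_iff_mul_eq_one constantCoeff_one_sub_X_sq_ne_zero]
  ext n
  rw [mul_sub, mul_one, map_sub, coeff_mul_X_pow', coeff_mk, coeff_mk, coeff_one]
  rcases n with _ | _ | n <;> simp [Nat.even_add]

lemma coeff_one_sub_X_sq_inv_nonneg (n : ℕ) : 0 ≤ coeff n (1 - X ^ 2 : K⟦X⟧)⁻¹ := by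
  rw [coeff_one_sub_X_sq_inv]
  split_ifs <;> simp

lemma coeff_one_add_X_pow_mul_pos {n c t : ℕ} (ht : t ≠ 0) (h : Even n ∨ c ≠ 0) :
    0 < coeff n ((1 + X) ^ c * (1 - X ^ 2)⁻¹ ^ t : K⟦X⟧) := by
  have coeff_inv_pow_pos {k : ℕ} (hk : Even k) : 0 < coeff k ((1 - X ^ 2)⁻¹ ^ t : K⟦X⟧) :=
    coeff_pow_pos coeff_one_sub_X_sq_inv_nonneg (by simp) (by simp [coeff_one_sub_X_sq_inv, hk]) ht
  have mul_pos_of {i j : ℕ} (hi : 0 < coeff i ((1 + X) ^ c : K⟦X⟧)) (hj : Even j) :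
      0 < coeff (i + j) ((1 + X) ^ c * (1 - X ^ 2)⁻¹ ^ t : K⟦X⟧) :=
    coeff_mul_pos (coeff_pow_nonneg coeff_one_add_X_nonneg c)
      (coeff_pow_nonneg coeff_one_sub_X_sq_inv_nonneg t) hi (coeff_inv_pow_pos hj)
  rcases Nat.even_or_odd n with even_n | ⟨l, rfl⟩
  · simpa using mul_pos_of (i := 0) (by simp) even_n
  · have c_ne_zero : c ≠ 0 := h.resolve_left (by simp)
    rw [add_comm]
    exact mul_pos_of (coeff_pow_pos coeff_one_add_X_nonneg (by simp) (by simp [coeff_one, coeff_X])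
      c_ne_zero) (even_two_mul l)

lemma coeff_one_sub_X_pow_mul_ne_zero {n c t : ℕ} (ht : t ≠ 0) (hc : c ≠ 0) :
    coeff n ((1 - X) ^ c * (1 - X ^ 2)⁻¹ ^ t : K⟦X⟧) ≠ 0 := by
  have rescale_inv : rescale (-1 : K) (1 - X ^ 2)⁻¹ = (1 - X ^ 2)⁻¹ := by
    ext n
    rw [coeff_rescale, coeff_one_sub_X_sq_inv]
    split_ifs with hn
    · rw [hn.neg_one_pow, one_mul]
    · rw [mul_zero]
  have rescale_eq : ((1 - X) ^ c * (1 - X ^ 2)⁻¹ ^ t : K⟦X⟧) =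
      rescale (-1) ((1 + X) ^ c * (1 - X ^ 2)⁻¹ ^ t) := by
    simp only [map_mul, map_pow, map_add, map_one, rescale_neg_one_X, rescale_inv, ← sub_eq_add_neg]
  rw [rescale_eq, coeff_rescale]
  exact mul_ne_zero (pow_ne_zero n (by simp)) (coeff_one_add_X_pow_mul_pos ht (.inr hc)).ne'

lemma one_add_X_inv : (1 + X : K⟦X⟧)⁻¹ = (1 - X) * (1 - X ^ 2)⁻¹ := by
  rw [PowerSeries.inv_eq_iff_mul_eq_one (by simp)]
  linear_combination PowerSeries.inv_mul_cancel _ (constantCoeff_one_sub_X_sq_ne_zero (K := K))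

lemma one_sub_X_pow_inv (e : ℕ) :
    ((1 - X) ^ e : K⟦X⟧)⁻¹ = (1 + X) ^ e * (1 - X ^ 2)⁻¹ ^ e := by
  rw [PowerSeries.inv_eq_iff_mul_eq_one (by simp), ← mul_pow, ← mul_pow]
  convert one_pow (M := K⟦X⟧) e using 2
  linear_combination PowerSeries.inv_mul_cancel _ (constantCoeff_one_sub_X_sq_ne_zero (K := K))

/-- The Lagrange coefficient for `f = 1 + X` and `g = (1 - X) ^ 2`, where the series is
`(1 + X) ^ (4 * N - (m + 1)) / (1 - X) ^ (2 * N)`. -/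
lemma even_and_eq_of_coeff_singlyEven_eq_zero {m N : ℕ} (hN : N ≠ 0)
    (h : coeff (N - 1) (d⁄dX K (1 + X) * (1 + X : K⟦X⟧)⁻¹ ^ (m + 1) *
      ((1 + X) ^ 4 * ((1 - X) ^ 2)⁻¹) ^ N) = 0) :
    Even N ∧ m + 1 = 6 * N := by
  have inv_cancel : ((1 - X) * (1 + X) * (1 - X ^ 2)⁻¹ : K⟦X⟧) = 1 := by
    linear_combination PowerSeries.inv_mul_cancel _ (constantCoeff_one_sub_X_sq_ne_zero (K := K))
  have cancel (n a b t : ℕ) : ((1 - X) ^ (n + a) * (1 + X) ^ (n + b) * (1 - X ^ 2)⁻¹ ^ (n + t) :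
      K⟦X⟧) = (1 - X) ^ a * (1 + X) ^ b * (1 - X ^ 2)⁻¹ ^ t := by
    calc ((1 - X) ^ (n + a) * (1 + X) ^ (n + b) * (1 - X ^ 2)⁻¹ ^ (n + t) : K⟦X⟧)
        = ((1 - X) * (1 + X) * (1 - X ^ 2)⁻¹) ^ n *
            ((1 - X) ^ a * (1 + X) ^ b * (1 - X ^ 2)⁻¹ ^ t) := by
          simp only [mul_pow, pow_add]
          ring
      _ = (1 - X) ^ a * (1 + X) ^ b * (1 - X ^ 2)⁻¹ ^ t := by rw [inv_cancel, one_pow, one_mul]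
  have series_eq : (d⁄dX K (1 + X) * (1 + X : K⟦X⟧)⁻¹ ^ (m + 1) *
      ((1 + X) ^ 4 * ((1 - X) ^ 2)⁻¹) ^ N) =
      (1 - X) ^ (m + 1) * (1 + X) ^ (6 * N) * (1 - X ^ 2)⁻¹ ^ (m + 1 + 2 * N) := by
    rw [one_add_X_inv, one_sub_X_pow_inv, map_add, derivative_X, Derivation.map_one_eq_zero,
      zero_add, one_mul]
    simp only [mul_pow, ← pow_mul, pow_add]
    ring
  rw [series_eq] at h
  rcases le_or_gt (m + 1) (6 * N) with hle | hlt
  · obtain ⟨c, hc⟩ := Nat.exists_eq_add_of_le hle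
    have quotient_eq := cancel (m + 1) 0 c (2 * N)
    rw [add_zero, pow_zero, one_mul, ← hc] at quotient_eq
    rw [quotient_eq] at h
    have not_even_or : ¬(Even (N - 1) ∨ c ≠ 0) := fun hor =>
      (coeff_one_add_X_pow_mul_pos (by lia) hor).ne' h
    grind
  · obtain ⟨c, hc, hmc⟩ : ∃ c ≠ 0, m + 1 = 6 * N + c := ⟨m + 1 - 6 * N, by lia, by lia⟩
    have quotient_eq := cancel (6 * N) c 0 (c + 2 * N)
    rw [add_zero, pow_zero, mul_one, ← add_assoc, ← hmc] at quotient_eq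
    rw [quotient_eq] at h
    exact absurd h (coeff_one_sub_X_pow_mul_ne_zero (by lia) hc)

/-- The Lagrange coefficient for `f = 1 + 14 * X + X ^ 2` and `g = (1 - X) ^ 4`. -/
lemma coeff_doublyEven_pos {m N : ℕ} (hN : m < 3 * N) (n : ℕ) :
    0 < coeff n (d⁄dX K (1 + 14 * X + X ^ 2) * (1 + 14 * X + X ^ 2 : K⟦X⟧)⁻¹ ^ (m + 1) *
      ((1 + 14 * X + X ^ 2) ^ 3 * ((1 - X) ^ 4)⁻¹) ^ N) := by
  set f : K⟦X⟧ := 1 + 14 * X + X ^ 2 with hf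
  have f_nonneg (k : ℕ) : 0 ≤ coeff k f := by
    rw [hf, ← map_ofNat (C (R := K)) 14, map_add, map_add, coeff_C_mul, coeff_one, coeff_X,
      coeff_X_pow]
    split_ifs <;> norm_num
  have derivative_nonneg (k : ℕ) : 0 ≤ coeff k (d⁄dX K f) := by
    rw [coeff_derivative]
    exact mul_nonneg (f_nonneg _) (by positivity)
  obtain ⟨c, hc⟩ := Nat.exists_eq_add_of_le (Nat.succ_le_of_lt hN)
  have series_eq : d⁄dX K f * f⁻¹ ^ (m + 1) * (f ^ 3 * ((1 - X) ^ 4)⁻¹) ^ N =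
      d⁄dX K f * f ^ c * ((1 + X) ^ (4 * N) * (1 - X ^ 2)⁻¹ ^ (4 * N)) := by
    have inv_pow_mul : f⁻¹ ^ (m + 1) * f ^ (m + 1) = 1 := by
      rw [← mul_pow, PowerSeries.inv_mul_cancel f (by simp [hf]), one_pow]
    rw [one_sub_X_pow_inv]
    simp only [mul_pow, ← pow_mul]
    rw [hc, Nat.succ_eq_add_one, pow_add f]
    linear_combination d⁄dX K f * f ^ c * (1 + X) ^ (4 * N) * (1 - X ^ 2)⁻¹ ^ (4 * N) * inv_pow_mul
  rw [series_eq]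
  have coeff_zero_pos : 0 < coeff 0 (d⁄dX K f * f ^ c) := by
    simp [hf, show constantCoeff (14 : K⟦X⟧) = 14 from map_ofNat _ 14]
  simpa using coeff_mul_pos (coeff_mul_nonneg derivative_nonneg (coeff_pow_nonneg f_nonneg c))
    (coeff_mul_nonneg (coeff_pow_nonneg coeff_one_add_X_nonneg (4 * N))
      (coeff_pow_nonneg coeff_one_sub_X_sq_inv_nonneg (4 * N))) coeff_zero_pos
    (coeff_one_add_X_pow_mul_pos (n := n) (by lia) (.inr (by lia)))

end Positivity

section ExtremalPolynomials

open Polynomial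

variable {K : Type*} [Field K]

lemma exists_coe_eq_one_add_X_pow_mul {w : K[X]} {N : ℕ} (hw0 : w.coeff 0 = 1)
    (hw : ∀ i ≠ 0, i ≤ N → w.coeff i = 0) :
    ∃ r : PowerSeries K, (w : PowerSeries K) = 1 + PowerSeries.X ^ (N + 1) * r := by
  have hdvd : (PowerSeries.X ^ (N + 1) : PowerSeries K) ∣ w - 1 := by
    rw [PowerSeries.X_pow_dvd_iff]
    intro i hi
    rw [map_sub, coeff_coe, PowerSeries.coeff_one]
    split_ifs with h0
    · rw [h0, hw0, sub_self]
    · rw [hw i h0 (Nat.lt_succ_iff.1 hi), sub_zero]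
  obtain ⟨r, hr⟩ := hdvd
  exact ⟨r, by rw [← hr, add_sub_cancel]⟩

lemma expand_X_mul_one_sub_X_pow (e : ℕ) :
    expand K e (X * (1 - X) ^ e) = (X - X ^ (e + 1)) ^ e := by
  rw [map_mul, map_pow, map_sub, map_one, expand_X, ← mul_pow]
  ring

variable [CharZero K]

lemma IsInvariant.exists_eq_sum_singlyEven {m : ℕ} {w : K[X]}
    (hw : IsInvariant m (expand K 2 w)) : ∃ a : ℕ → K, w =
      ∑ j ∈ range (m / 4 + 1), C (a j) * (1 + X) ^ (m - 4 * j) * (X * (1 - X) ^ 2) ^ j := by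
  have hf : IsInvariant 1 (expand K 2 (1 + X)) := by simpa using one_add_X_sq
  have hg : IsInvariant (1 * 4) (expand K 2 (X * (1 - X) ^ 2)) := by
    rw [expand_X_mul_one_sub_X_pow]
    exact X_sub_X_pow_three.pow 2
  exact exists_eq_sum even_two two_ne_zero (dvd_refl _) (by norm_num) (by simp) hf hg m
    (by rwa [one_mul])

lemma IsInvariant.exists_eq_sum_doublyEven {m : ℕ} {w : K[X]}
    (hw : IsInvariant (4 * m) (expand K 4 w)) : ∃ a : ℕ → K, w =
      ∑ j ∈ range (m / 3 + 1),
        C (a j) * (1 + 14 * X + X ^ 2) ^ (m - 3 * j) * (X * (1 - X) ^ 4) ^ j := by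
  have hf : IsInvariant 4 (expand K 4 (1 + 14 * X + X ^ 2)) := by
    convert one_add_X_pow_four_add_X_pow_eight (R := K) using 1
    simp only [map_add, map_one, map_mul, map_ofNat, map_pow, expand_X, ← pow_mul]
  have hg : IsInvariant (4 * 3) (expand K 4 (X * (1 - X) ^ 4)) := by
    rw [expand_X_mul_one_sub_X_pow]
    exact X_sub_X_pow_five.pow 4
  exact exists_eq_sum (by decide) four_ne_zero (by norm_num) (by norm_num) (by simp) hf hg m hw

lemma IsInvariant.add_natDegree_le {m s : ℕ} {v : K[X]}
    (hv : IsInvariant m (expand K 2 ((1 + X) ^ s * v))) (hv0 : v ≠ 0) : s + v.natDegree ≤ m := by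
  have one_add_X_ne_zero : (1 + X : K[X]) ≠ 0 := by
    simpa [add_comm] using X_add_C_ne_zero (1 : K)
  have natDegree_le := hv.natDegree_le
  rw [natDegree_expand, natDegree_mul (pow_ne_zero s one_add_X_ne_zero) hv0, natDegree_pow,
    show (1 + X : K[X]).natDegree = 1 by compute_degree!] at natDegree_le
  lia

lemma IsInvariant.exists_eq_sum_of_one_add_X_pow_dvd {m s : ℕ} {w : K[X]} (hw0 : w ≠ 0)
    (hw : IsInvariant m (expand K 2 w)) (hdvd : (1 + X) ^ s ∣ w) : ∃ a : ℕ → K, w =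
      ∑ j ∈ range ((m - s) / 4 + 1), C (a j) * (1 + X) ^ (m - 4 * j) * (X * (1 - X) ^ 2) ^ j := by
  obtain ⟨v, rfl⟩ := hdvd
  have natDegree_le := hw.add_natDegree_le (right_ne_zero_of_mul hw0)
  have v_invariant : IsInvariant (m - s) (expand K 2 v) := by
    have factor_invariant : IsInvariant s (expand K 2 ((1 + X) ^ s)) := by
      simpa using (one_add_X_sq (R := K)).pow s
    refine factor_invariant.of_mul_left ?_ ?_ ?_
    · rw [expand_ne_zero two_pos]
      exact left_ne_zero_of_mul hw0
    · rw [natDegree_expand]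
      lia
    · rwa [← map_mul, Nat.add_sub_cancel' (by lia)]
  obtain ⟨a, ha⟩ := v_invariant.exists_eq_sum_singlyEven
  refine ⟨a, ?_⟩
  nth_rewrite 1 [ha]
  rw [mul_sum]
  refine sum_congr rfl fun j hj => ?_
  have exponent_eq : m - 4 * j = s + (m - s - 4 * j) := by
    rw [mem_range] at hj
    lia
  rw [exponent_eq, pow_add]
  ring

end ExtremalPolynomials

section GapBounds

open Polynomial

variable {K : Type*} [Field K] [LinearOrder K] [IsStrictOrderedRing K]

lemma IsInvariant.even_and_eq_of_coeff_eq_zero {m s N : ℕ} {w : K[X]}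
    (hw : IsInvariant m (expand K 2 w)) (hw0 : w.coeff 0 = 1)
    (hgap : ∀ i ≠ 0, i ≤ N → w.coeff i = 0) (hdvd : (1 + X) ^ s ∣ w) (hm : m ≠ 0)
    (hms : m < s + 4 * N) : Even N ∧ m + 1 = 6 * N := by
  have w_ne_zero : w ≠ 0 := by
    rintro rfl
    simp at hw0
  have hN : N ≠ 0 := by
    obtain ⟨v, rfl⟩ := hdvd
    have natDegree_le := hw.add_natDegree_le (right_ne_zero_of_mul w_ne_zero)
    lia
  obtain ⟨a, ha⟩ := hw.exists_eq_sum_of_one_add_X_pow_dvd w_ne_zero hdvd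
  obtain ⟨r, hr⟩ := exists_coe_eq_one_add_X_pow_mul hw0 hgap
  rw [ha, ← coeToPowerSeries.ringHom_apply] at hr
  refine even_and_eq_of_coeff_singlyEven_eq_zero (K := K) hN
    (coeff_derivative_mul_inv_pow_eq_zero (a := a) (r := r) (J := (m - s) / 4) ?_ ?_ hm ?_ ?_ ?_)
  · simp
  · simp
  · lia
  · lia
  · simpa [map_sum] using hr

lemma IsInvariant.exists_coeff_ne_zero {m : ℕ} {w : K[X]}
    (hw : IsInvariant (4 * m) (expand K 4 w)) (hw0 : w.coeff 0 = 1) (hm : m ≠ 0) :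
    ∃ i ≠ 0, i ≤ m / 3 + 1 ∧ w.coeff i ≠ 0 := by
  by_contra! hgap
  obtain ⟨a, ha⟩ := hw.exists_eq_sum_doublyEven
  obtain ⟨r, hr⟩ := exists_coe_eq_one_add_X_pow_mul hw0 hgap
  rw [ha, ← coeToPowerSeries.ringHom_apply] at hr
  refine (coeff_doublyEven_pos (K := K) (m := m) (N := m / 3 + 1) (by lia) _).ne'
    (coeff_derivative_mul_inv_pow_eq_zero (a := a) (r := r) (J := m / 3) ?_ ?_ hm ?_ ?_ ?_)
  · simp
  · simp
  · lia
  · lia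
  · have coe_fourteen : ((14 : K[X]) : PowerSeries K) = 14 := map_ofNat coeToPowerSeries.ringHom 14
    simpa [map_sum, coe_fourteen] using hr

end GapBounds

section WeightEnumerators

open Polynomial

variable {ι : Type*} [Fintype ι]

lemma mem_dual2 {S : Set (ι → ZMod 2)} {x : ι → ZMod 2} : x ∈ dual2 S ↔ ∀ y ∈ S, x ⬝ᵥ y = 0 :=
  Iff.rfl

lemma hWt_eq_hammingNorm (x : ι → ZMod 2) : hWt x = hammingNorm x := by
  unfold hWt hammingNorm
  congr

lemma hWt_le_card (x : ι → ZMod 2) : hWt x ≤ Fintype.card ι := by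
  rw [hWt_eq_hammingNorm]
  exact hammingNorm_le_card_fintype

lemma hWt_eq_zero {x : ι → ZMod 2} : hWt x = 0 ↔ x = 0 := by
  rw [hWt_eq_hammingNorm, hammingNorm_eq_zero]

lemma hWt_eq_sum (x : ι → ZMod 2) : hWt x = ∑ i, if x i ≠ 0 then 1 else 0 := by
  rw [hWt, card_filter]

/-- The character `a ↦ (-1) ^ a` of `ZMod 2`. -/
noncomputable def signChar : AddChar (ZMod 2) ℚ := AddChar.zmodChar 2 (ζ := -1) (by norm_num)

lemma zmod_two_eq_zero_or_eq_one (a : ZMod 2) : a = 0 ∨ a = 1 := by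
  revert a
  decide

lemma signChar_one : signChar 1 = -1 := by
  rw [signChar, AddChar.zmodChar_apply, ZMod.val_one, pow_one]

lemma signChar_eq_one_iff {a : ZMod 2} : signChar a = 1 ↔ a = 0 := by
  obtain rfl | rfl := zmod_two_eq_zero_or_eq_one a
  · simp
  · norm_num [signChar_one]

lemma signChar_sum (x : ι → ZMod 2) : signChar (∑ i, x i) = ∏ i, signChar (x i) :=
  map_sum signChar.toAddMonoidHom x univ

lemma sum_signChar_mul_X_pow (a : ZMod 2) :
    ∑ b : ZMod 2, C (signChar (a * b)) * X ^ (if b ≠ 0 then 1 else 0) =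
      if a ≠ 0 then 1 - X else 1 + X := by
  rw [show (univ : Finset (ZMod 2)) = {0, 1} from rfl, sum_pair zero_ne_one]
  obtain rfl | rfl := zmod_two_eq_zero_or_eq_one a <;> simp [signChar_one, sub_eq_add_neg]

open Classical in
lemma macWilliams_X_pow_hWt (c : ι → ZMod 2) :
    macWilliams (Fintype.card ι) (X ^ hWt c) =
      ∑ v : ι → ZMod 2, C (signChar (c ⬝ᵥ v)) * X ^ hWt v := by
  have card_zeros : #{i | ¬c i ≠ 0} = Fintype.card ι - hWt c := by
    rw [← card_univ, ← card_filter_add_card_filter_not (s := univ) (fun i => c i ≠ 0), hWt,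
      Nat.add_sub_cancel_left]
  calc macWilliams (Fintype.card ι) (X ^ hWt c)
      = ∏ i, if c i ≠ 0 then 1 - X else 1 + X := by
        rw [macWilliams_X_pow (hWt_le_card c), prod_ite, prod_const, prod_const, card_zeros, hWt]
    _ = ∏ i, ∑ b, C (signChar (c i * b)) * X ^ (if b ≠ 0 then 1 else 0) := by
        simp only [sum_signChar_mul_X_pow]
    _ = ∑ v : ι → ZMod 2, ∏ i, C (signChar (c i * v i)) * X ^ (if v i ≠ 0 then 1 else 0) :=
        Fintype.prod_sum _
    _ = ∑ v : ι → ZMod 2, C (signChar (c ⬝ᵥ v)) * X ^ hWt v := by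
        refine sum_congr rfl fun v _ => ?_
        rw [prod_mul_distrib, prod_pow_eq_pow_sum, ← map_prod, ← signChar_sum, ← hWt_eq_sum]
        rfl

open Classical in
/-- The weight enumerator of a set of binary vectors, as a polynomial in `X ^ d`. It is only
meaningful when `d` divides all weights. -/
noncomputable def weightEnum (d : ℕ) (S : Set (ι → ZMod 2)) : ℚ[X] := ∑ x : S, X ^ (hWt x.1 / d)

lemma expand_weightEnum {d : ℕ} {S : Set (ι → ZMod 2)} (hS : ∀ x ∈ S, d ∣ hWt x) :
    expand ℚ d (weightEnum d S) = weightEnum 1 S := by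
  simp only [weightEnum, map_sum, map_pow, expand_X, Nat.div_one, ← pow_mul]
  exact sum_congr rfl fun x _ => by rw [Nat.mul_div_cancel' (hS x x.2)]

lemma exists_hWt_eq_of_coeff_weightEnum_ne_zero {d i : ℕ} {S : Set (ι → ZMod 2)}
    (hS : ∀ x ∈ S, d ∣ hWt x) (hi : (weightEnum d S).coeff i ≠ 0) : ∃ x ∈ S, hWt x = d * i := by
  rw [weightEnum, finsetSum_coeff] at hi
  obtain ⟨x, -, hx⟩ := exists_ne_zero_of_sum_ne_zero hi
  rw [coeff_X_pow, ite_ne_right_iff] at hx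
  exact ⟨x, x.2, by rw [hx.1, Nat.mul_div_cancel' (hS x x.2)]⟩

lemma coeff_zero_weightEnum {d : ℕ} {S : Set (ι → ZMod 2)} (hS : ∀ x ∈ S, d ∣ hWt x)
    (h0 : 0 ∈ S) : (weightEnum d S).coeff 0 = 1 := by
  rw [weightEnum, finsetSum_coeff, sum_eq_single ⟨0, h0⟩]
  · simp [hWt_eq_zero.2 rfl]
  · rintro x - hx
    rw [coeff_X_pow, if_neg]
    intro hdiv
    have hWt_zero : hWt x.1 = 0 := Nat.eq_zero_of_dvd_of_div_eq_zero (hS x x.2) hdiv.symm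
    exact hx (Subtype.ext (hWt_eq_zero.1 hWt_zero))
  · simp

open Classical in
/-- The weight enumerator of the code `D` with its words weighted by a character of `D`. -/
noncomputable def twistedEnum (D : Submodule (ZMod 2) (ι → ZMod 2)) (ε : AddChar D ℚ) : ℚ[X] :=
  ∑ c : D, C (ε c) * X ^ hWt c.1

/-- The vectors `v` for which `c ↦ (-1) ^ (c · v)` is the inverse of the character `ε` of `D`. For
the trivial character this is the dual code, in general it is a coset of it. -/
def twistedDual (D : Submodule (ZMod 2) (ι → ZMod 2)) (ε : AddChar D ℚ) : Set (ι → ZMod 2) :=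
  {v | ∀ c : D, ε c * signChar (c.1 ⬝ᵥ v) = 1}

variable {D : Submodule (ZMod 2) (ι → ZMod 2)}

lemma twistedEnum_zero : twistedEnum D 0 = weightEnum 1 (D : Set (ι → ZMod 2)) := by
  simp [twistedEnum, weightEnum]

lemma twistedDual_zero : twistedDual D 0 = dual2 D := by
  ext v
  simp [twistedDual, mem_dual2, signChar_eq_one_iff, dotProduct_comm v]

open Classical in
lemma sum_mul_signChar_dotProduct (ε : AddChar D ℚ) (v : ι → ZMod 2) :
    ∑ c : D, ε c * signChar (c.1 ⬝ᵥ v) =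
      if v ∈ twistedDual D ε then (Fintype.card D : ℚ) else 0 := by
  let dotProductHom : D →+ ZMod 2 :=
    { toFun := fun c => c.1 ⬝ᵥ v
      map_zero' := zero_dotProduct v
      map_add' := fun b c => add_dotProduct b.1 c.1 v }
  have mem_iff : v ∈ twistedDual D ε ↔ ε * signChar.compAddMonoidHom dotProductHom = 0 :=
    (AddChar.eq_zero_iff (ψ := ε * signChar.compAddMonoidHom dotProductHom)).symm
  simp only [mem_iff]
  exact AddChar.sum_eq_ite (ε * signChar.compAddMonoidHom dotProductHom)

open Classical in
theorem macWilliams_twistedEnum (ε : AddChar D ℚ) :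
    macWilliams (Fintype.card ι) (twistedEnum D ε) =
      (Fintype.card D : ℚ) • weightEnum 1 (twistedDual D ε) := by
  calc macWilliams (Fintype.card ι) (twistedEnum D ε)
      = ∑ c : D, ∑ v : ι → ZMod 2, C (ε c * signChar (c.1 ⬝ᵥ v)) * X ^ hWt v := by
        simp only [twistedEnum, map_sum, ← smul_eq_C_mul, map_smul, macWilliams_X_pow_hWt,
          smul_sum, smul_smul]
    _ = ∑ v : ι → ZMod 2, C (∑ c : D, ε c * signChar (c.1 ⬝ᵥ v)) * X ^ hWt v := by
        rw [sum_comm]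
        simp only [map_sum, sum_mul]
    _ = (Fintype.card D : ℚ) • weightEnum 1 (twistedDual D ε) := by
        simp only [sum_mul_signChar_dotProduct, apply_ite C, map_zero, ite_mul, zero_mul,
          ← sum_filter, weightEnum, Nat.div_one, smul_sum, smul_eq_C_mul]
        exact sum_subtype _ (by simp) _

lemma natDegree_twistedEnum_le (ε : AddChar D ℚ) :
    (twistedEnum D ε).natDegree ≤ Fintype.card ι :=
  natDegree_sum_le_of_forall_le _ _ fun c _ =>
    (natDegree_C_mul_X_pow_le _ _).trans (hWt_le_card c.1)

lemma twistedEnum_ne_zero (ε : AddChar D ℚ) : twistedEnum D ε ≠ 0 := by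
  suffices coeff_zero : (twistedEnum D ε).coeff 0 = 1 by
    intro enum_eq_zero
    simp [enum_eq_zero] at coeff_zero
  rw [twistedEnum, finsetSum_coeff, sum_eq_single 0]
  · simp [hWt_eq_zero.2 rfl]
  · rintro c - hc
    rw [coeff_C_mul_X_pow, if_neg]
    exact fun hWt_zero => hc (Subtype.ext (hWt_eq_zero.1 hWt_zero.symm))
  · simp

open Classical in
lemma two_pow_smul_twistedEnum (ε : AddChar D ℚ) :
    (2 ^ Fintype.card ι : ℚ) • twistedEnum D ε =
      (Fintype.card D : ℚ) • macWilliams (Fintype.card ι) (weightEnum 1 (twistedDual D ε)) := by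
  rw [← macWilliams_macWilliams (natDegree_twistedEnum_le ε), macWilliams_twistedEnum, map_smul]

lemma twistedDual_nonempty (ε : AddChar D ℚ) : (twistedDual D ε).Nonempty := by
  classical
  by_contra! dual_empty
  have := Set.isEmpty_coe_sort.2 dual_empty
  have enum_eq := two_pow_smul_twistedEnum ε
  rw [weightEnum, Fintype.sum_empty, map_zero, smul_zero] at enum_eq
  exact smul_ne_zero (by positivity) (twistedEnum_ne_zero ε) enum_eq

lemma one_sub_X_pow_dvd_twistedEnum {s : ℕ} {ε : AddChar D ℚ}
    (hs : ∀ v ∈ twistedDual D ε, s ≤ hWt v) : (1 - X) ^ s ∣ twistedEnum D ε := by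
  have X_pow_dvd : X ^ s ∣ weightEnum 1 (twistedDual D ε) := by
    refine dvd_sum fun v _ => pow_dvd_pow _ ?_
    rw [Nat.div_one]
    exact hs v v.2
  have two_pow_isUnit : IsUnit (C (2 ^ Fintype.card ι : ℚ)) := isUnit_C.2 (by simp)
  rw [← two_pow_isUnit.dvd_mul_left, ← smul_eq_C_mul, two_pow_smul_twistedEnum, smul_eq_C_mul]
  exact (one_sub_X_pow_dvd_macWilliams X_pow_dvd _).mul_left _

end WeightEnumerators

section SelfDualCodes

open Polynomial

variable {ι : Type*} [Fintype ι]

lemma natCast_hWt (x : ι → ZMod 2) : (hWt x : ZMod 2) = ∑ i, x i := by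
  rw [hWt_eq_sum, Nat.cast_sum]
  refine sum_congr rfl fun i _ => ?_
  obtain h | h := zmod_two_eq_zero_or_eq_one (x i) <;> simp [h]

lemma hWt_add_add_two_mul_hWt_mul (x y : ι → ZMod 2) :
    hWt (x + y) + 2 * hWt (x * y) = hWt x + hWt y := by
  simp only [hWt_eq_sum, mul_sum, ← sum_add_distrib]
  refine sum_congr rfl fun i _ => ?_
  obtain hx | hx := zmod_two_eq_zero_or_eq_one (x i) <;>
    obtain hy | hy := zmod_two_eq_zero_or_eq_one (y i) <;>
      simp [hx, hy, CharTwo.add_self_eq_zero]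

lemma hWt_one : hWt (1 : ι → ZMod 2) = Fintype.card ι := by
  simp [hWt]

namespace SelfDual2

variable {D : Submodule (ZMod 2) (ι → ZMod 2)}

lemma mem_iff (hD : SelfDual2 D) {x : ι → ZMod 2} : x ∈ D ↔ ∀ y ∈ D, x ⬝ᵥ y = 0 :=
  Set.ext_iff.1 hD x

lemma two_dvd_hWt_mul (hD : SelfDual2 D) {x y : ι → ZMod 2} (hx : x ∈ D) (hy : y ∈ D) :
    2 ∣ hWt (x * y) := by
  rw [← ZMod.natCast_eq_zero_iff, natCast_hWt]
  exact hD.mem_iff.1 hx y hy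

lemma two_dvd_hWt (hD : SelfDual2 D) {x : ι → ZMod 2} (hx : x ∈ D) : 2 ∣ hWt x := by
  have mul_self : x * x = x := by
    ext i
    obtain h | h := zmod_two_eq_zero_or_eq_one (x i) <;> simp [h]
  exact mul_self ▸ hD.two_dvd_hWt_mul hx hx

lemma one_mem (hD : SelfDual2 D) : 1 ∈ D := by
  rw [hD.mem_iff]
  intro y hy
  rw [one_dotProduct, ← natCast_hWt, ZMod.natCast_eq_zero_iff]
  exact hD.two_dvd_hWt hy

lemma exists_card_eq_two_mul (hD : SelfDual2 D) : ∃ m, Fintype.card ι = 2 * m :=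
  hWt_one (ι := ι) ▸ hD.two_dvd_hWt hD.one_mem

open Classical in
theorem macWilliams_weightEnum (hD : SelfDual2 D) :
    macWilliams (Fintype.card ι) (weightEnum 1 (D : Set (ι → ZMod 2))) =
      (Fintype.card D : ℚ) • weightEnum 1 (D : Set (ι → ZMod 2)) := by
  rw [← twistedEnum_zero, macWilliams_twistedEnum, twistedDual_zero, twistedEnum_zero, ← hD]

theorem isInvariant_weightEnum (hD : SelfDual2 D) {m : ℕ} (hm : Fintype.card ι = 2 * m) :
    IsInvariant m (weightEnum 1 (D : Set (ι → ZMod 2))) := by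
  classical
  have natDegree_le : (weightEnum 1 (D : Set (ι → ZMod 2))).natDegree ≤ 2 * m :=
    hm ▸ twistedEnum_zero (D := D) ▸ natDegree_twistedEnum_le 0
  have weightEnum_ne_zero : weightEnum 1 (D : Set (ι → ZMod 2)) ≠ 0 :=
    twistedEnum_zero (D := D) ▸ twistedEnum_ne_zero 0
  have macWilliams_eq := hm ▸ hD.macWilliams_weightEnum
  have card_sq : (Fintype.card D : ℚ) ^ 2 = (2 ^ m) ^ 2 := by
    have involution := macWilliams_macWilliams natDegree_le
    rw [macWilliams_eq, map_smul, macWilliams_eq, smul_smul] at involution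
    rw [sq, smul_left_injective ℚ weightEnum_ne_zero involution, ← pow_mul, mul_comm]
  have card_eq : (Fintype.card D : ℚ) = 2 ^ m :=
    (pow_left_inj₀ (by positivity) (by positivity) two_ne_zero).1 card_sq
  exact ⟨natDegree_le, card_eq ▸ macWilliams_eq⟩

/-- The character `x ↦ (-1) ^ (wt x / 2)` of a self-dual code, whose kernel is the doubly even
subcode. -/
noncomputable def halfWeightChar (hD : SelfDual2 D) : AddChar D ℚ where
  toFun x := (-1) ^ (hWt x.1 / 2)
  map_zero_eq_one' := by simp [hWt_eq_zero.2 rfl]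
  map_add_eq_mul' x y := by
    obtain ⟨a, ha⟩ := hD.two_dvd_hWt x.2
    obtain ⟨b, hb⟩ := hD.two_dvd_hWt y.2
    obtain ⟨c, hc⟩ := hD.two_dvd_hWt_mul x.2 y.2
    have hWt_add := hWt_add_add_two_mul_hWt_mul x.1 y.1
    have half_sum : a + b = hWt (x.1 + y.1) / 2 + 2 * c := by lia
    have half_x : hWt x.1 / 2 = a := by lia
    have half_y : hWt y.1 / 2 = b := by lia
    rw [half_x, half_y, ← pow_add, half_sum, pow_add, pow_mul, neg_one_sq, one_pow, mul_one]
    rfl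

lemma halfWeightChar_apply (hD : SelfDual2 D) (x : D) :
    hD.halfWeightChar x = (-1) ^ (hWt x.1 / 2) :=
  rfl

lemma halfWeightChar_eq_one_iff (hD : SelfDual2 D) (x : D) :
    hD.halfWeightChar x = 1 ↔ 4 ∣ hWt x.1 := by
  have two_dvd := hD.two_dvd_hWt x.2
  rw [halfWeightChar_apply, neg_one_pow_eq_one_iff_even (by norm_num), Nat.even_iff]
  lia

lemma twistedDual_halfWeightChar_subset (hD : SelfDual2 D)
    (hsingly : SinglyEven (D : Set (ι → ZMod 2))) :
    twistedDual D hD.halfWeightChar ⊆ shadow (D : Set (ι → ZMod 2)) := by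
  intro v hv
  refine ⟨mem_dual2.2 fun y hy => ?_, fun hvD => ?_⟩
  · have twisted_eq_one := hv ⟨y, hy.1⟩
    rwa [(hD.halfWeightChar_eq_one_iff _).2 hy.2, one_mul, signChar_eq_one_iff,
      dotProduct_comm] at twisted_eq_one
  · obtain ⟨x, hx, hx4⟩ := hsingly
    have twisted_eq_one := hv ⟨x, hx⟩
    rw [hD.mem_iff.1 hx v hvD, AddChar.map_zero_eq_one, mul_one,
      halfWeightChar_eq_one_iff] at twisted_eq_one
    exact hx4 twisted_eq_one

lemma shadow_nonempty (hD : SelfDual2 D) (hsingly : SinglyEven (D : Set (ι → ZMod 2))) :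
    (shadow (D : Set (ι → ZMod 2))).Nonempty :=
  (twistedDual_nonempty _).mono (hD.twistedDual_halfWeightChar_subset hsingly)

lemma expand_weightEnum_comp_neg_X (hD : SelfDual2 D) :
    expand ℚ 2 ((weightEnum 2 (D : Set (ι → ZMod 2))).comp (-X)) =
      twistedEnum D hD.halfWeightChar := by
  rw [weightEnum, twistedEnum, ← coe_compRingHom_apply, map_sum, map_sum]
  refine sum_congr rfl fun x _ => ?_
  rw [halfWeightChar_apply, coe_compRingHom_apply, pow_comp, X_comp, map_pow, map_neg, expand_X,
    ← neg_one_mul, mul_pow, ← pow_mul, Nat.mul_div_cancel' (hD.two_dvd_hWt x.2)]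
  simp only [map_pow, map_neg, map_one]

theorem one_add_X_pow_dvd_weightEnum (hD : SelfDual2 D)
    (hsingly : SinglyEven (D : Set (ι → ZMod 2))) {s : ℕ}
    (hs : ∀ v ∈ shadow (D : Set (ι → ZMod 2)), s ≤ hWt v) :
    (1 + X) ^ s ∣ weightEnum 2 (D : Set (ι → ZMod 2)) := by
  have dvd_expand : (1 - X) ^ s ∣
      expand ℚ 2 ((weightEnum 2 (D : Set (ι → ZMod 2))).comp (-X)) := by
    rw [hD.expand_weightEnum_comp_neg_X]
    exact one_sub_X_pow_dvd_twistedEnum fun v hv =>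
      hs v (hD.twistedDual_halfWeightChar_subset hsingly hv)
  have dvd_comp := one_sub_X_pow_dvd_of_dvd_expand two_ne_zero dvd_expand
  have dvd_comp_comp := map_dvd (compRingHom (-X)) dvd_comp
  simpa [comp_assoc] using dvd_comp_comp

end SelfDual2

end SelfDualCodes

section MinimumWeights

variable {ι : Type*} [Fintype ι] {S : Set (ι → ZMod 2)}

lemma minHam_le {x : ι → ZMod 2} (hx : x ∈ S) (hx0 : x ≠ 0) : minHam S ≤ hWt x :=
  Nat.sInf_le ⟨x, hx, hx0, rfl⟩

lemma exists_hWt_eq_minHam (hS : ∃ x ∈ S, x ≠ 0) : ∃ x ∈ S, x ≠ 0 ∧ hWt x = minHam S := by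
  obtain ⟨x, hx, hx0⟩ := hS
  exact Nat.sInf_mem (s := {d | ∃ x ∈ S, x ≠ 0 ∧ hWt x = d}) ⟨hWt x, x, hx, hx0, rfl⟩

lemma minHam_le_card : minHam S ≤ Fintype.card ι := by
  by_cases hS : ∃ x ∈ S, x ≠ 0
  · obtain ⟨x, -, -, hwt⟩ := exists_hWt_eq_minHam hS
    exact hwt ▸ hWt_le_card x
  · have no_weights : {d | ∃ x ∈ S, x ≠ 0 ∧ hWt x = d} = ∅ :=
      Set.eq_empty_of_forall_notMem fun _ ⟨x, hx, hx0, _⟩ => hS ⟨x, hx, hx0⟩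
    rw [minHam, no_weights, Nat.sInf_empty]
    exact Nat.zero_le _

lemma SelfDual2.exists_mem_ne_zero [Nonempty ι] {D : Submodule (ZMod 2) (ι → ZMod 2)}
    (hD : SelfDual2 D) : ∃ x ∈ (D : Set (ι → ZMod 2)), x ≠ 0 :=
  ⟨1, hD.one_mem, one_ne_zero⟩

lemma ne_zero_of_mem_shadow {D : Submodule (ZMod 2) (ι → ZMod 2)} {x : ι → ZMod 2}
    (hx : x ∈ shadow (D : Set (ι → ZMod 2))) : x ≠ 0 := by
  rintro rfl
  exact hx.2 D.zero_mem

lemma SinglyEven.nonempty (hS : SinglyEven S) : Nonempty ι := by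
  obtain ⟨x, -, hx⟩ := hS
  by_contra! ι_empty
  exact hx (by simp [hWt])

end MinimumWeights

section UpperBounds

open Polynomial

variable {ι : Type*} [Fintype ι] {D : Submodule (ZMod 2) (ι → ZMod 2)}

lemma aeval_I_macWilliams_X_pow {q t : ℕ} (ht : t ≤ q) :
    aeval Complex.I (macWilliams (4 * q) (X ^ (4 * t) : ℚ[X])) = (-4) ^ q := by
  have one_sub_I_pow : (1 - Complex.I) ^ 4 = -4 := by
    linear_combination (Complex.I ^ 2 - 4 * Complex.I + 5) * Complex.I_sq
  have one_add_I_pow : (1 + Complex.I) ^ 4 = -4 := by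
    linear_combination (Complex.I ^ 2 + 4 * Complex.I + 5) * Complex.I_sq
  rw [macWilliams_X_pow (by lia), ← Nat.mul_sub]
  simp only [map_mul, map_pow, map_sub, map_add, map_one, aeval_X, pow_mul, one_sub_I_pow,
    one_add_I_pow]
  rw [← pow_add, Nat.add_sub_cancel' ht]

/-- In the MacWilliams identity at `X = i`, every codeword contributes `(-4) ^ (n / 4)` on the left
and `1` on the right, so that `(-4) ^ (n / 4)` is positive. -/
theorem SelfDual2.eight_dvd_card (hD : SelfDual2 D) (hdoubly : DoublyEven (D : Set (ι → ZMod 2))) :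
    8 ∣ Fintype.card ι := by
  classical
  obtain ⟨q, hq⟩ : 4 ∣ Fintype.card ι := hWt_one (ι := ι) ▸ hdoubly 1 hD.one_mem
  have aeval_macWilliams : ∀ x : D,
      aeval Complex.I (macWilliams (Fintype.card ι) (X ^ hWt x.1 : ℚ[X])) = (-4) ^ q := by
    intro x
    obtain ⟨t, ht⟩ := hdoubly x x.2
    have hWt_le := hWt_le_card x.1
    rw [hq, ht, aeval_I_macWilliams_X_pow (by lia)]
  have aeval_word : ∀ x : D, aeval Complex.I (X ^ hWt x.1 : ℚ[X]) = 1 := by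
    intro x
    obtain ⟨t, ht⟩ := hdoubly x x.2
    rw [map_pow, aeval_X, ht, pow_mul, Complex.I_pow_four, one_pow]
  have neg_four_pow : ((-4) ^ q : ℂ) = Fintype.card D := by
    have identity := congrArg (aeval Complex.I) hD.macWilliams_weightEnum
    simpa [weightEnum, aeval_macWilliams, aeval_word, Rat.smul_def] using identity
  have neg_four_pow_pos : (0 : ℝ) < (-4) ^ q := by
    rw [show ((-4) ^ q : ℝ) = Fintype.card D by exact_mod_cast neg_four_pow]
    exact_mod_cast Fintype.card_pos
  have even_q : Even q := by
    by_contra odd_q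
    have := (Nat.not_even_iff_odd.1 odd_q).pow_neg (show (-4 : ℝ) < 0 by norm_num)
    linarith
  rw [hq]
  obtain ⟨l, rfl⟩ := even_q
  lia

/-- The Bachoc–Gaborit bound. -/
theorem SelfDual2.minHam_shadow_add_two_mul_minHam_le (hD : SelfDual2 D)
    (hsingly : SinglyEven (D : Set (ι → ZMod 2)))
    (hexc : ¬(Fintype.card ι % 24 = 22 ∧
      minHam (D : Set (ι → ZMod 2)) = 4 * (Fintype.card ι / 24) + 6)) :
    minHam (shadow (D : Set (ι → ZMod 2))) + 2 * minHam (D : Set (ι → ZMod 2)) ≤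
      Fintype.card ι / 2 + 4 := by
  have := hsingly.nonempty
  have card_pos : 0 < Fintype.card ι := Fintype.card_pos
  obtain ⟨m, hm⟩ := hD.exists_card_eq_two_mul
  have even_weights : ∀ x ∈ (D : Set (ι → ZMod 2)), 2 ∣ hWt x := fun x => hD.two_dvd_hWt
  have invariant : IsInvariant m (expand ℚ 2 (weightEnum 2 (D : Set (ι → ZMod 2)))) :=
    expand_weightEnum even_weights ▸ hD.isInvariant_weightEnum hm
  have coeff_zero := coeff_zero_weightEnum even_weights D.zero_mem
  have shadow_dvd := hD.one_add_X_pow_dvd_weightEnum hsingly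
    fun v hv => minHam_le hv (ne_zero_of_mem_shadow hv)
  obtain ⟨N, hN⟩ : ∃ N, minHam (D : Set (ι → ZMod 2)) = 2 * (N + 1) := by
    obtain ⟨x, hx, hx0, hwt⟩ := exists_hWt_eq_minHam hD.exists_mem_ne_zero
    obtain ⟨t, ht⟩ := hD.two_dvd_hWt hx
    have hWt_ne_zero := hWt_eq_zero.not.2 hx0
    exact ⟨t - 1, by lia⟩
  have gap : ∀ i ≠ 0, i ≤ N → (weightEnum 2 (D : Set (ι → ZMod 2))).coeff i = 0 := by
    intro i hi hiN
    by_contra coeff_ne_zero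
    obtain ⟨x, hx, hwt⟩ := exists_hWt_eq_of_coeff_weightEnum_ne_zero even_weights coeff_ne_zero
    have min_le := minHam_le hx (hWt_eq_zero.not.1 (by lia))
    lia
  by_contra! bound_fails
  obtain ⟨⟨t, ht⟩, hmN⟩ := invariant.even_and_eq_of_coeff_eq_zero coeff_zero gap shadow_dvd
    (by lia) (by lia)
  exact hexc (by lia)

/-- The Mallows–Sloane bound. -/
theorem SelfDual2.minHam_le_of_doublyEven (hD : SelfDual2 D)
    (hdoubly : DoublyEven (D : Set (ι → ZMod 2))) :
    minHam (D : Set (ι → ZMod 2)) ≤ 4 * (Fintype.card ι / 24) + 4 := by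
  obtain ⟨m, hm⟩ := hD.eight_dvd_card hdoubly
  obtain rfl | m_ne_zero := eq_or_ne m 0
  · exact minHam_le_card.trans (by lia)
  have invariant : IsInvariant (4 * m) (expand ℚ 4 (weightEnum 4 (D : Set (ι → ZMod 2)))) :=
    expand_weightEnum hdoubly ▸ hD.isInvariant_weightEnum (by lia)
  obtain ⟨i, hi, hi_le, coeff_ne_zero⟩ :=
    invariant.exists_coeff_ne_zero (coeff_zero_weightEnum hdoubly D.zero_mem) m_ne_zero
  obtain ⟨x, hx, hwt⟩ := exists_hWt_eq_of_coeff_weightEnum_ne_zero hdoubly coeff_ne_zero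
  have min_le := minHam_le hx (hWt_eq_zero.not.1 (by lia))
  lia

end UpperBounds

section LeeWeights

variable {ι : Type*} [Fintype ι]

/-- The isomorphism of `ZMod 2` with the ideal `2 * ZMod 4`, as a map to `ZMod 4`. -/
def doubleHom : ZMod 2 →+ ZMod 4 where
  toFun a := if a = 0 then 0 else 2
  map_zero' := by decide
  map_add' := by decide

lemma doubleHom_mul (a : ZMod 2) (b : ZMod 4) : doubleHom a * b =
    doubleHom (a * ZMod.castHom (by norm_num : 2 ∣ 4) (ZMod 2) b) := by
  revert a b
  decide

lemma doubleHom_injective : Function.Injective doubleHom := by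
  decide

lemma leeVal_doubleHom (a : ZMod 2) : leeVal (doubleHom a) = 2 * if a ≠ 0 then 1 else 0 := by
  revert a
  decide

lemma leeWt_doubleHom_comp (x : ι → ZMod 2) : leeWt (doubleHom ∘ x) = 2 * hWt x := by
  simp only [leeWt, Function.comp_apply, leeVal_doubleHom, hWt_eq_sum, mul_sum]

lemma doubleHom_comp_mem_dualZ4 {C : Set (ι → ZMod 4)} {x : ι → ZMod 2}
    (hx : x ∈ dual2 (residue C)) : doubleHom ∘ x ∈ dualZ4 C := by
  intro c hc
  simp only [Function.comp_apply, doubleHom_mul, ← map_sum]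
  exact (congrArg doubleHom (hx (res2 c) ⟨c, hc, rfl⟩)).trans (map_zero doubleHom)

lemma minLee_le_two_mul_hWt {C : Set (ι → ZMod 4)} (hC : dualZ4 C ⊆ C) {x : ι → ZMod 2}
    (hx : x ∈ dual2 (residue C)) (hx0 : x ≠ 0) : minLee C ≤ 2 * hWt x := by
  refine Nat.sInf_le ⟨doubleHom ∘ x, hC (doubleHom_comp_mem_dualZ4 hx), fun double_eq_zero => ?_,
    leeWt_doubleHom_comp x⟩
  exact hx0 (doubleHom_injective.comp_left (double_eq_zero.trans (by ext; simp)))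

lemma natCast_hWt_res2 (c : ι → ZMod 4) : (hWt (res2 c) : ZMod 4) = ∑ i, c i * c i := by
  have mul_self : ∀ a : ZMod 4, a * a =
      if ZMod.castHom (by norm_num : 2 ∣ 4) (ZMod 2) a ≠ 0 then 1 else 0 := by decide
  simp only [hWt_eq_sum, Nat.cast_sum, Nat.cast_ite, Nat.cast_one, Nat.cast_zero, mul_self]
  rfl

lemma four_dvd_hWt_of_mem_residue {C : Set (ι → ZMod 4)} (hC : C ⊆ dualZ4 C) {x : ι → ZMod 2}
    (hx : x ∈ residue C) : 4 ∣ hWt x := by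
  obtain ⟨c, hc, rfl⟩ := hx
  rw [← ZMod.natCast_eq_zero_iff, natCast_hWt_res2]
  exact hC hc c hc

end LeeWeights

section ResidueCode

variable {ι : Type*} [Fintype ι] {C : Submodule (ZMod 4) (ι → ZMod 4)}
  {D : Submodule (ZMod 2) (ι → ZMod 2)}

lemma SelfDual2.minLee_le_two_mul_minHam [Nonempty ι] (hC : SelfDualZ4 C) (hD : SelfDual2 D)
    (hsub : residue (C : Set (ι → ZMod 4)) ⊆ D) :
    minLee (C : Set (ι → ZMod 4)) ≤ 2 * minHam (D : Set (ι → ZMod 2)) := by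
  obtain ⟨x, hx, hx0, hwt⟩ := exists_hWt_eq_minHam hD.exists_mem_ne_zero
  rw [← hwt]
  exact minLee_le_two_mul_hWt hC.ge (fun y hy => hD.mem_iff.1 hx y (hsub hy)) hx0

lemma SelfDual2.minLee_le_two_mul_minHam_shadow (hC : SelfDualZ4 C) (hD : SelfDual2 D)
    (hsingly : SinglyEven (D : Set (ι → ZMod 2))) (hsub : residue (C : Set (ι → ZMod 4)) ⊆ D) :
    minLee (C : Set (ι → ZMod 4)) ≤ 2 * minHam (shadow (D : Set (ι → ZMod 2))) := by
  obtain ⟨v, hv⟩ := hD.shadow_nonempty hsingly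
  obtain ⟨x, hx, hx0, hwt⟩ := exists_hWt_eq_minHam ⟨v, hv, ne_zero_of_mem_shadow hv⟩
  rw [← hwt]
  exact minLee_le_two_mul_hWt hC.ge
    (fun y hy => hx.1 y ⟨hsub hy, four_dvd_hWt_of_mem_residue hC.le hy⟩) hx0

end ResidueCode

end Z4Note

open Z4Note in
theorem sextremal_or_extremal_of_residue_subset_length24k16_general {ι : Type*} [Fintype ι] {k : ℕ}
    {C : Submodule (ZMod 4) (ι → ZMod 4)} {D : Submodule (ZMod 2) (ι → ZMod 2)}
    (hcard : Fintype.card ι = 24 * k + 16) (hC : SelfDualZ4 C)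
    (hlee : 8 * k + 8 ≤ minLee (C : Set (ι → ZMod 4))) (hD : SelfDual2 D)
    (hsub : residue (C : Set (ι → ZMod 4)) ⊆ D) :
    (SinglyEven (D : Set (ι → ZMod 2)) →
      SExtremal D ∧ minHam (D : Set (ι → ZMod 2)) = 4 * k + 4) ∧
    (DoublyEven (D : Set (ι → ZMod 2)) → minHam (D : Set (ι → ZMod 2)) = 4 * k + 4) := by
  have : Nonempty ι := Fintype.card_pos_iff.1 (by lia)
  have code_bound := hD.minLee_le_two_mul_minHam hC hsub
  refine ⟨fun hsingly => ?_, fun hdoubly => ?_⟩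
  · have shadow_bound := hD.minLee_le_two_mul_minHam_shadow hC hsingly hsub
    have upper_bound := hD.minHam_shadow_add_two_mul_minHam_le hsingly (by lia)
    exact ⟨⟨hD, hsingly, fun _ => by lia, fun hexc => by lia⟩, by lia⟩
  · have upper_bound := hD.minHam_le_of_doublyEven hdoubly
    lia

open Z4Note in
/-- length `24k+16`, minimum Lee weight `8k+8`: a binary self-dual code
containing the residue code is s-extremal with minimum weight `4k+4` if singly even,
and extremal (minimum weight `4k+4`) if doubly even. -/
theorem sextremal_or_extremal_of_residue_subset_length24k16
    (k : ℕ) (hk : 0 < k)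
    (C : Submodule (ZMod 4) (Fin (24 * k + 16) → ZMod 4))
    (hsd : SelfDualZ4 C)
    (hlee : minLee (C : Set (Fin (24 * k + 16) → ZMod 4)) = 8 * k + 8)
    (D : Submodule (ZMod 2) (Fin (24 * k + 16) → ZMod 2))
    (hD : SelfDual2 D)
    (hsub : residue (C : Set (Fin (24 * k + 16) → ZMod 4)) ⊆
      (D : Set (Fin (24 * k + 16) → ZMod 2))) :
    (SinglyEven (D : Set (Fin (24 * k + 16) → ZMod 2)) →
      SExtremal D ∧ minHam (D : Set (Fin (24 * k + 16) → ZMod 2)) = 4 * k + 4) ∧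
    (DoublyEven (D : Set (Fin (24 * k + 16) → ZMod 2)) →
      minHam (D : Set (Fin (24 * k + 16) → ZMod 2)) = 4 * k + 4) :=
  sextremal_or_extremal_of_residue_subset_length24k16_general (by simp) hsd hlee.ge hD hsub
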